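/- Let Q be a Euclidean quiver and C a thick subcategory of rep(Q) that contains at least one indecomposable representation that is preprojective or preinjective. Then C is generated by an exceptional sequence; equivalently, C is equivalent to rep(Q') for some acyclic quiver Q'. -/

import Mathlib

open Matrix BigOperators

/-- A finite quiver: `n` vertices, `a` arrows with source and target maps. -/
structure FinQuiver where
  n : ℕ
  a : ℕ
  src : Fin a → Fin n
  tgt : Fin a → Fin n

namespace FinQuiver

/-- A finite quiver is acyclic iff it admits a topological ordering of vertices. -/
def Acyclic (Q : FinQuiver) : Prop :=
  ∃ h : Fin Q.n → ℕ, ∀ x, h (Q.src x) < h (Q.tgt x)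

/-- Connectivity of the underlying graph. -/
def Connected (Q : FinQuiver) : Prop :=
  ∀ S : Finset (Fin Q.n), S.Nonempty → S ≠ Finset.univ →
    ∃ x, (Q.src x ∈ S ∧ Q.tgt x ∉ S) ∨ (Q.tgt x ∈ S ∧ Q.src x ∉ S)

/-- The Euler form ⟨d,e⟩ = Σ_i d_i e_i − Σ_{α : i → j} d_i e_j. -/
def euler (Q : FinQuiver) (d e : Fin Q.n → ℤ) : ℤ :=
  (∑ i, d i * e i) - ∑ x, d (Q.src x) * e (Q.tgt x)

/-- A (possibly disconnected) Dynkin quiver: acyclic with positive definite Tits form. -/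
def IsDynkin (Q : FinQuiver) : Prop :=
  Q.Acyclic ∧ ∀ d : Fin Q.n → ℤ, d ≠ 0 → 0 < Q.euler d d

/-- `δ` is the null root: positive, isotropic, and every isotropic vector is an
integer multiple of `δ`. -/
def IsNullRoot (Q : FinQuiver) (δ : Fin Q.n → ℤ) : Prop :=
  (∀ i, 0 < δ i) ∧ Q.euler δ δ = 0 ∧
    ∀ d : Fin Q.n → ℤ, Q.euler d d = 0 → ∃ m : ℤ, d = m • δ

/-- A Euclidean (affine) quiver: connected, acyclic, positive semidefinite Tits form
with a null root. -/
def IsEuclidean (Q : FinQuiver) : Prop :=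
  Q.Acyclic ∧ Q.Connected ∧ (∀ d, 0 ≤ Q.euler d d) ∧ ∃ δ, Q.IsNullRoot δ

end FinQuiver

/-- A finite-dimensional representation of `Q` over `k`: dimensions at each vertex,
and a matrix for each arrow. -/
structure QRep (k : Type) [Field k] (Q : FinQuiver) where
  d : Fin Q.n → ℕ
  mat : ∀ x : Fin Q.a, Matrix (Fin (d (Q.tgt x))) (Fin (d (Q.src x))) k

namespace QRep

variable {k : Type} [Field k] {Q : FinQuiver}

/-- The dimension vector of a representation, as an integer vector. -/
def dimVec (M : QRep k Q) : Fin Q.n → ℤ := fun i => (M.d i : ℤ)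

/-- The space of morphisms of representations `M → N`. -/
def homSpace (M N : QRep k Q) :
    Submodule k (∀ i, Matrix (Fin (N.d i)) (Fin (M.d i)) k) where
  carrier := {f | ∀ x, f (Q.tgt x) * M.mat x = N.mat x * f (Q.src x)}
  add_mem' := by
    intro f g hf hg x
    simp only [Pi.add_apply, Matrix.add_mul, Matrix.mul_add, hf x, hg x]
  zero_mem' := by intro x; simp
  smul_mem' := by
    intro c f hf x
    simp only [Pi.smul_apply, Matrix.smul_mul, Matrix.mul_smul, hf x]

/-- The standard map whose kernel is `Hom(M,N)` and cokernel is `Ext¹(M,N)`. -/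
def extMap (M N : QRep k Q) :
    (∀ i, Matrix (Fin (N.d i)) (Fin (M.d i)) k) →ₗ[k]
    (∀ x : Fin Q.a, Matrix (Fin (N.d (Q.tgt x))) (Fin (M.d (Q.src x))) k) where
  toFun f := fun x => f (Q.tgt x) * M.mat x - N.mat x * f (Q.src x)
  map_add' := by
    intro f g; funext x
    simp only [Pi.add_apply, Matrix.add_mul, Matrix.mul_add]
    abel
  map_smul' := by
    intro c f; funext x
    simp only [Pi.smul_apply, Matrix.smul_mul, Matrix.mul_smul, RingHom.id_apply,
      smul_sub]

/-- dim_k Hom(M,N). -/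
noncomputable def homDim (M N : QRep k Q) : ℕ :=
  Module.finrank k (homSpace M N)

/-- dim_k Ext¹(M,N), defined as the dimension of the cokernel of `extMap`. -/
noncomputable def extDim (M N : QRep k Q) : ℕ :=
  Module.finrank k
    ((∀ x : Fin Q.a, Matrix (Fin (N.d (Q.tgt x))) (Fin (M.d (Q.src x))) k) ⧸
      LinearMap.range (extMap M N))

/-- Isomorphism of representations. -/
def IsoRep (M N : QRep k Q) : Prop :=
  ∃ f ∈ homSpace M N, ∀ i, Function.Bijective (Matrix.mulVecLin (f i))

/-- `L` is (the source of a monomorphism into) a subrepresentation of `M`. -/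
def IsSubrep (L M : QRep k Q) : Prop :=
  ∃ f ∈ homSpace L M, ∀ i, Function.Injective (Matrix.mulVecLin (f i))

/-- `L` is a direct summand of `M` (split monomorphism with retraction). -/
def IsSummand (L M : QRep k Q) : Prop :=
  ∃ f ∈ homSpace L M, ∃ g ∈ homSpace M L, ∀ i, g i * f i = 1

/-- `M` is indecomposable: nonzero, and its endomorphism ring has no nontrivial
idempotents. -/
def Indec (M : QRep k Q) : Prop :=
  (∃ i, M.d i ≠ 0) ∧
    ∀ f ∈ homSpace M M, (∀ i, f i * f i = f i) → f = 0 ∨ f = 1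

/-- An exceptional representation: indecomposable and rigid. -/
def Exceptional (M : QRep k Q) : Prop :=
  Indec M ∧ extDim M M = 0

/-- `(f, g)` form a short exact sequence `0 → A → B → C → 0` of representations. -/
def IsSES (A B C : QRep k Q)
    (f : ∀ i, Matrix (Fin (B.d i)) (Fin (A.d i)) k)
    (g : ∀ i, Matrix (Fin (C.d i)) (Fin (B.d i)) k) : Prop :=
  f ∈ homSpace A B ∧ g ∈ homSpace B C ∧
    ∀ i, Function.Injective (Matrix.mulVecLin (f i)) ∧
      Function.Surjective (Matrix.mulVecLin (g i)) ∧
      LinearMap.range (Matrix.mulVecLin (f i)) = LinearMap.ker (Matrix.mulVecLin (g i))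

/-- A thick (= abelian and extension-closed, since rep(Q) is hereditary) full
subcategory: closed under isomorphism, direct summands and two-out-of-three for
short exact sequences. -/
def Thick (P : QRep k Q → Prop) : Prop :=
  (∀ M N, IsoRep M N → P M → P N) ∧
  (∀ L M, IsSummand L M → P M → P L) ∧
  (∀ A B C f g, IsSES A B C f g →
    ((P A → P B → P C) ∧ (P A → P C → P B) ∧ (P B → P C → P A)))

/-- `P` is the smallest thick subcategory containing `S`. -/
def GeneratedBy (P : QRep k Q → Prop) (S : Set (QRep k Q)) : Prop :=
  Thick P ∧ (∀ X ∈ S, P X) ∧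
    ∀ P' : QRep k Q → Prop, Thick P' → (∀ X ∈ S, P' X) → ∀ M, P M → P' M

/-- An exceptional sequence. -/
def ExcSeq {r : ℕ} (E : Fin r → QRep k Q) : Prop :=
  (∀ i, Exceptional (E i) ∧ homDim (E i) (E i) = 1) ∧
    ∀ i j : Fin r, i < j → homDim (E i) (E j) = 0 ∧ extDim (E i) (E j) = 0

/-- King's criterion for `⟨d,−⟩`-semi-stability. -/
def SemiStable (d : Fin Q.n → ℤ) (M : QRep k Q) : Prop :=
  Q.euler d M.dimVec = 0 ∧ ∀ L : QRep k Q, IsSubrep L M → Q.euler d L.dimVec ≤ 0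

/-- `M` is regular: every indecomposable summand pairs to zero with the null root. -/
def RegularRep (δ : Fin Q.n → ℤ) (M : QRep k Q) : Prop :=
  ∀ L, IsSummand L M → Indec L → Q.euler δ L.dimVec = 0

/-- `M` is in the right perpendicular category of `V`. -/
def RPerp (V M : QRep k Q) : Prop := homDim V M = 0 ∧ extDim V M = 0

/-- `M` is in the left perpendicular category of `V`. -/
def LPerp (V M : QRep k Q) : Prop := homDim M V = 0 ∧ extDim M V = 0

/-- `P` is a projective representation (Ext¹(P,−) = 0). -/
def IsProjRep (P : QRep k Q) : Prop := ∀ M : QRep k Q, extDim P M = 0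

end QRep

/-- `α` is a Schur root: the dimension vector of an indecomposable representation
with trivial endomorphism ring. -/
def IsSchurRoot (k : Type) [Field k] (Q : FinQuiver) (α : Fin Q.n → ℤ) : Prop :=
  ∃ M : QRep k Q, M.dimVec = α ∧ QRep.Indec M ∧ QRep.homDim M M = 1

/-- `ext(α,β) = 0`: some representations of these dimension vectors have no
extensions. -/
def ExtZero (k : Type) [Field k] (Q : FinQuiver) (α β : Fin Q.n → ℤ) : Prop :=
  ∃ M N : QRep k Q, M.dimVec = α ∧ N.dimVec = β ∧ QRep.extDim M N = 0

/-- Kac's characterization of the canonical decomposition: `c` is the canonical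
decomposition of `d` iff the entries sum to `d`, are Schur roots, and are pairwise
ext-orthogonal. -/
def IsCanonDecomp (k : Type) [Field k] (Q : FinQuiver) (d : Fin Q.n → ℤ)
    (c : List (Fin Q.n → ℤ)) : Prop :=
  c.sum = d ∧ (∀ α ∈ c, IsSchurRoot k Q α) ∧
    ∀ i j : Fin c.length, i ≠ j → ExtZero k Q (c.get i) (c.get j)

/-!
Split off one exceptional object `E` of `C` such that the perpendicular category `C ∩ E^⊥` contains
no isotropic dimension vector, and then induct.

Simple objects of the abelian category `C` are bricks, and a brick is exceptional as soon as the
Tits form is positive on it. If `C` contains an isotropic dimension vector `d ≠ 0`, then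
`⟨dim X, d⟩ ≠ 0` because `X` has nonzero defect, so additivity of `⟨-, d⟩` along short exact
sequences yields a simple object `E` of `C` with `⟨dim E, d⟩ ≠ 0`. All isotropic vectors are
proportional and pair to zero with each other, whence `E` is exceptional and no isotropic dimension
vector is left in `C ∩ E^⊥`. From then on every simple object is exceptional. An object of `C` is
built from `E` and an object of `C ∩ E^⊥` by successively killing `Ext¹(E, -)` and `Hom(E, -)`, so
a complete exceptional sequence of `C ∩ E^⊥` extends to one of `C` by adding `E`.
-/

namespace FinQuiver

variable (Q : FinQuiver)

/-- The Euler form as a bundled bilinear form. -/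
def eulerForm : LinearMap.BilinForm ℤ (Fin Q.n → ℤ) :=
  LinearMap.mk₂ ℤ Q.euler
    (fun _ _ _ => by simp only [euler, Pi.add_apply, add_mul, Finset.sum_add_distrib]; ring)
    (fun _ _ _ => by
      simp only [euler, Pi.smul_apply, smul_eq_mul, mul_assoc, ← Finset.mul_sum, mul_sub])
    (fun _ _ _ => by simp only [euler, Pi.add_apply, mul_add, Finset.sum_add_distrib]; ring)
    (fun _ _ _ => by
      simp only [euler, Pi.smul_apply, smul_eq_mul, mul_left_comm, ← Finset.mul_sum, mul_sub])

@[simp]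
lemma eulerForm_apply (d e : Fin Q.n → ℤ) : Q.eulerForm d e = Q.euler d e := rfl

/-- A vector which pairs nontrivially with every nonzero isotropic vector. On a Euclidean quiver
these are the vectors `x` with `⟨δ, x⟩ ≠ 0`, i.e. of nonzero defect. -/
def DetectsIsotropic (x : Fin Q.n → ℤ) : Prop :=
  ∀ d, Q.euler d d = 0 → Q.euler x d = 0 → d = 0

variable {Q} (hq : ∀ d, 0 ≤ Q.euler d d) {d e x : Fin Q.n → ℤ}
include hq

lemma euler_add_euler_swap_eq_zero (hd : Q.euler d d = 0) (e : Fin Q.n → ℤ) :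
    Q.euler d e + Q.euler e d = 0 := by
  have h := (Q.eulerForm + LinearMap.flip Q.eulerForm).apply_sq_le_of_symm
    (fun x => add_nonneg (hq x) (hq x)) ⟨fun _ _ => add_comm _ _⟩ d e
  simp only [LinearMap.add_apply, LinearMap.flip_apply, eulerForm_apply, hd, add_zero,
    zero_mul] at h
  exact pow_eq_zero_iff two_ne_zero |>.1 (le_antisymm h (sq_nonneg _))

lemma IsNullRoot.detectsIsotropic {δ : Fin Q.n → ℤ} (hδ : Q.IsNullRoot δ)
    (hx : Q.euler δ x ≠ 0) : Q.DetectsIsotropic x := by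
  intro d hd hxd
  obtain ⟨m, rfl⟩ := hδ.2.2 d hd
  rw [← eulerForm_apply, map_smul, smul_eq_mul, eulerForm_apply,
    eq_neg_of_add_eq_zero_right (euler_add_euler_swap_eq_zero hq hδ.2.1 x), mul_eq_zero,
    neg_eq_zero] at hxd
  rw [hxd.resolve_right hx, zero_smul]

/-- The isotropic vectors form a line. -/
lemma DetectsIsotropic.smul_eq_smul (hx : Q.DetectsIsotropic x) (hd : Q.euler d d = 0)
    (he : Q.euler e e = 0) : Q.euler x d • e = Q.euler x e • d := by
  refine sub_eq_zero.1 (hx _ ?_ ?_)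
  · have h := euler_add_euler_swap_eq_zero hq hd e
    simp only [← eulerForm_apply, map_sub, map_smul, LinearMap.sub_apply, LinearMap.smul_apply,
      smul_eq_mul] at h hd he ⊢
    linear_combination (Q.eulerForm x d) ^ 2 * he + (Q.eulerForm x e) ^ 2 * hd -
      Q.eulerForm x d * Q.eulerForm x e * h
  · simp only [← eulerForm_apply, map_sub, map_smul, smul_eq_mul]
    ring

lemma DetectsIsotropic.euler_eq_zero (hx : Q.DetectsIsotropic x) (hd : Q.euler d d = 0)
    (he : Q.euler e e = 0) : Q.euler e d = 0 := by
  by_cases hd0 : d = 0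
  · rw [hd0, ← eulerForm_apply, map_zero]
  have h := congr(Q.eulerForm $(hx.smul_eq_smul hq hd he) d)
  simp only [map_smul, LinearMap.smul_apply, eulerForm_apply, hd, smul_zero] at h
  exact (smul_eq_zero.1 h).resolve_left fun h => hd0 (hx d hd h)

lemma DetectsIsotropic.of_euler_ne_zero (hx : Q.DetectsIsotropic x) {y : Fin Q.n → ℤ}
    (hd : Q.euler d d = 0) (hyd : Q.euler y d ≠ 0) : Q.DetectsIsotropic y := by
  intro e he hye
  have h := congr(Q.eulerForm y $(hx.smul_eq_smul hq hd he))
  simp only [map_smul, eulerForm_apply, hye, smul_zero] at h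
  exact hx e he ((smul_eq_zero.1 h.symm).resolve_right hyd)

end FinQuiver

namespace QRep

section LinearAlgebra

variable {l m n : Type*} [Fintype n]

lemma exists_mul_eq_of_mulVec_mem_range {R : Type*} [CommSemiring R] [Fintype l]
    {F : Matrix m l R} {H : Matrix m n R} (h : ∀ v, H *ᵥ v ∈ LinearMap.range F.mulVecLin) :
    ∃ U : Matrix l n R, F * U = H := by
  classical
  choose u hu using h
  refine ⟨Matrix.of fun i j => u (Pi.single j 1) i, Matrix.ext fun i j => ?_⟩
  exact (congrFun (hu (Pi.single j 1)) i).trans (by simp)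

variable {k : Type*} [Field k] [Fintype m]

lemma exists_left_inverse_of_mulVecLin_injective [DecidableEq n] {F : Matrix m n k}
    (hF : Function.Injective F.mulVecLin) : ∃ F' : Matrix n m k, F' * F = 1 := by
  classical
  obtain ⟨g, hg⟩ := F.mulVecLin.exists_leftInverse_of_injective (LinearMap.ker_eq_bot.2 hF)
  refine ⟨g.toMatrix', ?_⟩
  rw [← LinearMap.toMatrix'_toLin' F, ← LinearMap.toMatrix'_comp]
  exact (congrArg _ hg).trans LinearMap.toMatrix'_id

lemma exists_rank_factorization (F : Matrix m n k) :
    ∃ (r : ℕ) (j : Matrix m (Fin r) k) (p : Matrix (Fin r) n k)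
      (j' : Matrix (Fin r) m k) (p' : Matrix n (Fin r) k),
      F = j * p ∧ j' * j = 1 ∧ p * p' = 1 := by
  classical
  let e := (Module.finBasis k (LinearMap.range F.mulVecLin)).equivFun
  let j := ((LinearMap.range F.mulVecLin).subtype ∘ₗ e.symm.toLinearMap).toMatrix'
  let p := (e.toLinearMap ∘ₗ F.mulVecLin.rangeRestrict).toMatrix'
  have hj : j.mulVecLin = (LinearMap.range F.mulVecLin).subtype ∘ₗ e.symm.toLinearMap :=
    Matrix.toLin'_toMatrix' _
  have hp : p.mulVecLin = e.toLinearMap ∘ₗ F.mulVecLin.rangeRestrict :=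
    Matrix.toLin'_toMatrix' _
  obtain ⟨j', hj'⟩ := exists_left_inverse_of_mulVecLin_injective (F := j) <| by
    rw [hj]
    exact Subtype.val_injective.comp e.symm.injective
  obtain ⟨p', hp'⟩ := Matrix.mulVec_surjective_iff_exists_right_inverse (A := p).1 <| by
    change Function.Surjective p.mulVecLin
    rw [hp]
    exact e.surjective.comp F.mulVecLin.surjective_rangeRestrict
  refine ⟨_, j, p, j', p', ?_, hj', hp'⟩
  apply Matrix.toLin'.injective
  rw [Matrix.toLin'_mul]
  ext v : 2
  simp [j, p]

lemma exists_splitting_of_idempotent {e : Matrix n n k} (he : e * e = e) :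
    ∃ (r : ℕ) (i : Matrix n (Fin r) k) (p : Matrix (Fin r) n k), i * p = e ∧ p * i = 1 := by
  obtain ⟨r, j, p, j', p', rfl, hj, hp⟩ := exists_rank_factorization e
  refine ⟨r, j, p, rfl, ?_⟩
  calc p * j = j' * j * (p * j) * (p * p') := by rw [hj, hp, Matrix.one_mul, Matrix.mul_one]
    _ = j' * (j * p * (j * p)) * p' := by simp only [Matrix.mul_assoc]
    _ = j' * j * (p * p') := by rw [he]; simp only [Matrix.mul_assoc]
    _ = 1 := by rw [hj, hp, Matrix.mul_one]

end LinearAlgebra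

section BlockMatrices

variable {R : Type*} [Semiring R] {m₁ m₂ n₁ n₂ : Type*}
  (A : Matrix m₁ n₁ R) (B : Matrix m₁ n₂ R) (D : Matrix m₂ n₂ R)

lemma fromRows_mul_fromCols_add [Fintype m₁] [Fintype m₂]
    [DecidableEq m₁] [DecidableEq m₂] :
    (Matrix.fromRows 1 0 : Matrix (m₁ ⊕ m₂) m₁ R) * (Matrix.fromCols 1 0 : Matrix m₁ (m₁ ⊕ m₂) R) +
      (Matrix.fromRows 0 1 : Matrix (m₁ ⊕ m₂) m₂ R) *
        (Matrix.fromCols 0 1 : Matrix m₂ (m₁ ⊕ m₂) R) = 1 := by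
  rw [Matrix.fromRows_mul_fromCols, Matrix.fromRows_mul_fromCols, Matrix.fromBlocks_add]
  simp

lemma fromBlocks_mul_fromRows_one_zero [Fintype m₁] [Fintype n₁] [Fintype n₂]
    [DecidableEq m₁] [DecidableEq n₁] :
    Matrix.fromBlocks A B 0 D * (Matrix.fromRows 1 0 : Matrix (n₁ ⊕ n₂) n₁ R) =
      (Matrix.fromRows 1 0 : Matrix (m₁ ⊕ m₂) m₁ R) * A := by
  simp [Matrix.fromRows_mul, Matrix.fromBlocks_mul_fromRows]

lemma fromBlocks_mul_fromRows_zero_one [Fintype m₁] [Fintype m₂] [Fintype n₁] [Fintype n₂]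
    [DecidableEq m₁] [DecidableEq m₂] [DecidableEq n₂] :
    Matrix.fromBlocks A B 0 D * (Matrix.fromRows 0 1 : Matrix (n₁ ⊕ n₂) n₂ R) =
      (Matrix.fromRows 1 0 : Matrix (m₁ ⊕ m₂) m₁ R) * B +
        (Matrix.fromRows 0 1 : Matrix (m₁ ⊕ m₂) m₂ R) * D := by
  ext (i | i) j <;> simp [Matrix.fromRows_mul, Matrix.fromBlocks_mul_fromRows]

lemma fromCols_one_zero_mul_fromBlocks [Fintype m₁] [Fintype m₂] [Fintype n₁] [Fintype n₂]
    [DecidableEq m₁] [DecidableEq n₁] [DecidableEq n₂] :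
    (Matrix.fromCols 1 0 : Matrix m₁ (m₁ ⊕ m₂) R) * Matrix.fromBlocks A B 0 D =
      A * (Matrix.fromCols 1 0 : Matrix n₁ (n₁ ⊕ n₂) R) +
        B * (Matrix.fromCols 0 1 : Matrix n₂ (n₁ ⊕ n₂) R) := by
  ext i (j | j) <;> simp [Matrix.mul_fromCols, Matrix.fromCols_mul_fromBlocks]

lemma fromCols_zero_one_mul_fromBlocks [Fintype m₁] [Fintype m₂] [Fintype n₂]
    [DecidableEq m₂] [DecidableEq n₂] :
    (Matrix.fromCols 0 1 : Matrix m₂ (m₁ ⊕ m₂) R) * Matrix.fromBlocks A B 0 D =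
      D * (Matrix.fromCols 0 1 : Matrix n₂ (n₁ ⊕ n₂) R) := by
  simp [Matrix.mul_fromCols, Matrix.fromCols_mul_fromBlocks]

end BlockMatrices

section Sequences

variable {k : Type} [Field k] {Q : FinQuiver} {A B C : QRep k Q}
  {f : ∀ i, Matrix (Fin (B.d i)) (Fin (A.d i)) k} {g : ∀ i, Matrix (Fin (C.d i)) (Fin (B.d i)) k}

lemma mul_mem_homSpace (hf : f ∈ homSpace A B) (hg : g ∈ homSpace B C) :
    (fun i => g i * f i) ∈ homSpace A C := fun x => by
  rw [Matrix.mul_assoc, hf x, ← Matrix.mul_assoc, hg x, Matrix.mul_assoc]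

lemma one_mem_homSpace : (1 : ∀ i, Matrix (Fin (A.d i)) (Fin (A.d i)) k) ∈ homSpace A A :=
  fun x => by simp

lemma IsSES.mul_eq_zero (h : IsSES A B C f g) (i : Fin Q.n) : g i * f i = 0 := by
  apply Matrix.toLin'.injective
  rw [Matrix.toLin'_mul, map_zero]
  exact LinearMap.range_le_ker_iff.1 (h.2.2 i).2.2.le

lemma IsSES.exists_retraction (h : IsSES A B C f g)
    {s : ∀ i, Matrix (Fin (B.d i)) (Fin (C.d i)) k} (hs : ∀ i, g i * s i = 1) :
    ∃ r : ∀ i, Matrix (Fin (A.d i)) (Fin (B.d i)) k,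
      ∀ i, r i * f i = 1 ∧ r i * s i = 0 ∧ f i * r i + s i * g i = 1 := by
  have hker (i v) : (1 - s i * g i) *ᵥ v ∈ LinearMap.range (f i).mulVecLin := by
    rw [(h.2.2 i).2.2]
    simp [Matrix.mul_sub, ← Matrix.mul_assoc, hs]
  choose r hr using fun i => exists_mul_eq_of_mulVec_mem_range (hker i)
  choose f' hf' using fun i => exists_left_inverse_of_mulVecLin_injective (h.2.2 i).1
  have hr' (i) : r i = f' i * (1 - s i * g i) := by
    rw [← hr, ← Matrix.mul_assoc, hf', Matrix.one_mul]
  refine ⟨r, fun i => ⟨?_, ?_, by rw [hr, sub_add_cancel]⟩⟩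
  · rw [hr', Matrix.mul_assoc, Matrix.sub_mul, Matrix.mul_assoc, h.mul_eq_zero, Matrix.mul_zero,
      sub_zero, Matrix.one_mul, hf']
  · rw [hr', Matrix.mul_assoc, Matrix.sub_mul, Matrix.mul_assoc, hs, Matrix.one_mul,
      Matrix.mul_one, sub_self, Matrix.mul_zero]

lemma IsSES.exists_splitting (h : IsSES A B C f g) :
    ∃ (r : ∀ i, Matrix (Fin (A.d i)) (Fin (B.d i)) k)
      (s : ∀ i, Matrix (Fin (B.d i)) (Fin (C.d i)) k),
      ∀ i, r i * f i = 1 ∧ g i * s i = 1 ∧ f i * r i + s i * g i = 1 := by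
  choose s hs using fun i => Matrix.mulVec_surjective_iff_exists_right_inverse.1 (h.2.2 i).2.1
  obtain ⟨r, hr⟩ := h.exists_retraction hs
  exact ⟨r, s, fun i => ⟨(hr i).1, hs i, (hr i).2.2⟩⟩

lemma isSES_of_splitting (hf : f ∈ homSpace A B) (hg : g ∈ homSpace B C)
    (r : ∀ i, Matrix (Fin (A.d i)) (Fin (B.d i)) k)
    (s : ∀ i, Matrix (Fin (B.d i)) (Fin (C.d i)) k) (hr : ∀ i, r i * f i = 1)
    (hs : ∀ i, g i * s i = 1) (hrs : ∀ i, f i * r i + s i * g i = 1) : IsSES A B C f g := by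
  have hgf (i) : g i * f i = 0 := by
    have := congr(g i * $(hrs i) * f i)
    simpa [Matrix.mul_add, Matrix.add_mul, ← Matrix.mul_assoc, hs,
      Matrix.mul_assoc (g i * f i), hr] using this
  refine ⟨hf, hg, fun i => ⟨?_, ?_, ?_⟩⟩
  · exact Function.LeftInverse.injective (g := (r i).mulVecLin) fun v => by simp [hr]
  · exact Function.RightInverse.surjective (g := (s i).mulVecLin) fun v => by simp [hs]
  · refine le_antisymm ?_ fun v hv => ⟨r i *ᵥ v, ?_⟩
    · rintro _ ⟨v, rfl⟩
      simp [hgf]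
    · have := congr($(hrs i) *ᵥ v)
      rw [LinearMap.mem_ker, Matrix.mulVecLin_apply] at hv
      rwa [Matrix.add_mulVec, ← Matrix.mulVec_mulVec, ← Matrix.mulVec_mulVec, hv,
        Matrix.mulVec_zero, add_zero, Matrix.one_mulVec] at this

end Sequences

section Constructions

variable {k : Type} [Field k] {Q : FinQuiver}

lemma IsSES.d_eq {A B C : QRep k Q} {f : ∀ i, Matrix (Fin (B.d i)) (Fin (A.d i)) k}
    {g : ∀ i, Matrix (Fin (C.d i)) (Fin (B.d i)) k} (h : IsSES A B C f g) : B.d = A.d + C.d := by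
  ext i
  obtain ⟨hf, hg, hfg⟩ := h.2.2 i
  have := (g i).mulVecLin.finrank_range_add_finrank_ker
  rw [LinearMap.range_eq_top.2 hg, ← hfg, finrank_top, LinearMap.finrank_range_of_inj hf] at this
  simp only [Module.finrank_fin_fun] at this
  rw [Pi.add_apply, ← this, add_comm]

lemma IsSES.dimVec_eq {A B C : QRep k Q} {f : ∀ i, Matrix (Fin (B.d i)) (Fin (A.d i)) k}
    {g : ∀ i, Matrix (Fin (C.d i)) (Fin (B.d i)) k} (h : IsSES A B C f g) :
    B.dimVec = A.dimVec + C.dimVec := by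
  ext i
  simp only [dimVec, h.d_eq, Pi.add_apply, Nat.cast_add]

lemma IsoRep.isSummand {M N : QRep k Q} (h : IsoRep M N) : IsSummand N M := by
  obtain ⟨f, hf, hbij⟩ := h
  choose s hs using fun i => Matrix.mulVec_surjective_iff_exists_right_inverse.1 (hbij i).2
  have hs' (i) : s i * f i = 1 := by
    obtain ⟨r, hr⟩ := exists_left_inverse_of_mulVecLin_injective (hbij i).1
    rw [← Matrix.one_mul (s i), ← hr, Matrix.mul_assoc r, hs, Matrix.mul_one, hr]
  refine ⟨s, fun x => ?_, f, hf, hs⟩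
  calc s (Q.tgt x) * N.mat x = s (Q.tgt x) * (N.mat x * f (Q.src x)) * s (Q.src x) := by
        rw [Matrix.mul_assoc, Matrix.mul_assoc (N.mat x), hs, Matrix.mul_one]
    _ = M.mat x * s (Q.src x) := by
        rw [← hf x, ← Matrix.mul_assoc, hs', Matrix.one_mul]

lemma exists_kernel {A B : QRep k Q} {g : ∀ i, Matrix (Fin (B.d i)) (Fin (A.d i)) k}
    (hg : g ∈ homSpace A B) (hsurj : ∀ i, Function.Surjective (g i).mulVecLin) :
    ∃ (K : QRep k Q) (f : ∀ i, Matrix (Fin (A.d i)) (Fin (K.d i)) k), IsSES K A B f g := by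
  choose s hs using fun i => Matrix.mulVec_surjective_iff_exists_right_inverse.1 (hsurj i)
  have hidem (i) : (1 - s i * g i) * (1 - s i * g i) = 1 - s i * g i := by
    rw [Matrix.sub_mul, Matrix.one_mul, Matrix.mul_assoc, Matrix.mul_sub, ← Matrix.mul_assoc (g i),
      hs, Matrix.mul_one, Matrix.one_mul, sub_self, Matrix.mul_zero, sub_zero]
  choose d f r hfr hrf using fun i => exists_splitting_of_idempotent (hidem i)
  have hgf (i) : g i * f i = 0 := by
    calc g i * f i = g i * (f i * r i) * f i := by
          rw [Matrix.mul_assoc, Matrix.mul_assoc, hrf, Matrix.mul_one]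
      _ = 0 := by
          rw [hfr, Matrix.mul_sub, ← Matrix.mul_assoc, hs, Matrix.mul_one, Matrix.one_mul,
            sub_self, Matrix.zero_mul]
  refine ⟨⟨d, fun x => r (Q.tgt x) * A.mat x * f (Q.src x)⟩, f, isSES_of_splitting (fun x => ?_)
    hg r s hrf hs fun i => by rw [hfr, sub_add_cancel]⟩
  calc f (Q.tgt x) * (r (Q.tgt x) * A.mat x * f (Q.src x))
      = f (Q.tgt x) * r (Q.tgt x) * (A.mat x * f (Q.src x)) := by simp only [Matrix.mul_assoc]
    _ = A.mat x * f (Q.src x) := by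
        rw [hfr, Matrix.sub_mul, Matrix.one_mul, Matrix.mul_assoc, ← Matrix.mul_assoc (g (Q.tgt x)),
          hg x, Matrix.mul_assoc, hgf, Matrix.mul_zero, Matrix.mul_zero, sub_zero]

lemma exists_cokernel {A B : QRep k Q} {f : ∀ i, Matrix (Fin (B.d i)) (Fin (A.d i)) k}
    (hf : f ∈ homSpace A B) (hinj : ∀ i, Function.Injective (f i).mulVecLin) :
    ∃ (C : QRep k Q) (g : ∀ i, Matrix (Fin (C.d i)) (Fin (B.d i)) k), IsSES A B C f g := by
  choose r hr using fun i => exists_left_inverse_of_mulVecLin_injective (hinj i)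
  have hidem (i) : (1 - f i * r i) * (1 - f i * r i) = 1 - f i * r i := by
    rw [Matrix.sub_mul, Matrix.one_mul, Matrix.mul_assoc, Matrix.mul_sub, ← Matrix.mul_assoc (r i),
      hr, Matrix.mul_one, Matrix.one_mul, sub_self, Matrix.mul_zero, sub_zero]
  choose d s g hsg hgs using fun i => exists_splitting_of_idempotent (hidem i)
  have hgf (i) : g i * f i = 0 := by
    calc g i * f i = g i * (s i * g i) * f i := by
          rw [← Matrix.mul_assoc, hgs, Matrix.one_mul]
      _ = 0 := by
          rw [hsg, Matrix.mul_assoc, Matrix.sub_mul, Matrix.mul_assoc, hr, Matrix.mul_one,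
            Matrix.one_mul, sub_self, Matrix.mul_zero]
  refine ⟨⟨d, fun x => g (Q.tgt x) * B.mat x * s (Q.src x)⟩, g, isSES_of_splitting hf
    (fun x => ?_) r s hr hgs fun i => by rw [hsg, add_sub_cancel]⟩
  symm
  calc g (Q.tgt x) * B.mat x * s (Q.src x) * g (Q.src x)
      = g (Q.tgt x) * B.mat x * (s (Q.src x) * g (Q.src x)) := Matrix.mul_assoc _ _ _
    _ = g (Q.tgt x) * B.mat x := by
        rw [hsg, Matrix.mul_sub, Matrix.mul_one, ← Matrix.mul_assoc, Matrix.mul_assoc (g (Q.tgt x)),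
          ← hf x, ← Matrix.mul_assoc, hgf, Matrix.zero_mul, Matrix.zero_mul, sub_zero]

lemma exists_image_factorization {A B : QRep k Q} {f : ∀ i, Matrix (Fin (B.d i)) (Fin (A.d i)) k}
    (hf : f ∈ homSpace A B) :
    ∃ (I : QRep k Q) (p : ∀ i, Matrix (Fin (I.d i)) (Fin (A.d i)) k)
      (j : ∀ i, Matrix (Fin (B.d i)) (Fin (I.d i)) k),
      p ∈ homSpace A I ∧ j ∈ homSpace I B ∧ (∀ i, Function.Surjective (p i).mulVecLin) ∧
        (∀ i, Function.Injective (j i).mulVecLin) ∧ ∀ i, f i = j i * p i := by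
  choose d j p j' p' hjp hj hp using fun i => exists_rank_factorization (f i)
  have hfp (i) : f i * p' i = j i := by rw [hjp, Matrix.mul_assoc, hp, Matrix.mul_one]
  have hjf (i) : j' i * f i = p i := by rw [hjp, ← Matrix.mul_assoc, hj, Matrix.one_mul]
  have hmat (x) : p (Q.tgt x) * A.mat x =
      j' (Q.tgt x) * B.mat x * j (Q.src x) * p (Q.src x) := by
    rw [← hjf, Matrix.mul_assoc, hf x, Matrix.mul_assoc _ (j (Q.src x)), ← hjp, Matrix.mul_assoc]
  refine ⟨⟨d, fun x => p (Q.tgt x) * A.mat x * p' (Q.src x)⟩, p, j, fun x => ?_, fun x => ?_,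
    fun i => Matrix.mulVec_surjective_iff_exists_right_inverse.2 ⟨p' i, hp i⟩, fun i => ?_, hjp⟩
  · change _ = p (Q.tgt x) * A.mat x * p' (Q.src x) * p (Q.src x)
    rw [hmat, Matrix.mul_assoc _ (p (Q.src x)) (p' (Q.src x)), hp, Matrix.mul_one]
  · change j (Q.tgt x) * (p (Q.tgt x) * A.mat x * p' (Q.src x)) = _
    rw [← hfp (Q.src x), ← Matrix.mul_assoc, ← Matrix.mul_assoc, ← hjp, hf x, Matrix.mul_assoc]
  · exact Function.LeftInverse.injective (g := (j' i).mulVecLin) fun v => by simp [hj]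

/-- The extension of `C` by `A` with cocycle `c`, on the spaces `k ^ (A.d i + C.d i)`. The direct
sum is the case `c = 0`. -/
def extension (A C : QRep k Q)
    (c : ∀ x : Fin Q.a, Matrix (Fin (A.d (Q.tgt x))) (Fin (C.d (Q.src x))) k) : QRep k Q where
  d i := A.d i + C.d i
  mat x := Matrix.reindex finSumFinEquiv finSumFinEquiv
    (Matrix.fromBlocks (A.mat x) (c x) 0 (C.mat x))

namespace extension

variable (A C : QRep k Q)
  (c : ∀ x : Fin Q.a, Matrix (Fin (A.d (Q.tgt x))) (Fin (C.d (Q.src x))) k)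

/-- The inclusion of the first block. -/
def inl (i : Fin Q.n) : Matrix (Fin ((extension A C c).d i)) (Fin (A.d i)) k :=
  (Matrix.fromRows 1 0).submatrix finSumFinEquiv.symm id

/-- The inclusion of the second block, a morphism only if `c = 0`. -/
def inr (i : Fin Q.n) : Matrix (Fin ((extension A C c).d i)) (Fin (C.d i)) k :=
  (Matrix.fromRows 0 1).submatrix finSumFinEquiv.symm id

/-- The projection to the first block, a morphism only if `c = 0`. -/
def fst (i : Fin Q.n) : Matrix (Fin (A.d i)) (Fin ((extension A C c).d i)) k :=
  (Matrix.fromCols 1 0).submatrix id finSumFinEquiv.symm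

/-- The projection to the second block. -/
def snd (i : Fin Q.n) : Matrix (Fin (C.d i)) (Fin ((extension A C c).d i)) k :=
  (Matrix.fromCols 0 1).submatrix id finSumFinEquiv.symm

variable (i : Fin Q.n)

lemma fst_mul_inl : fst A C c i * inl A C c i = 1 :=
  (Matrix.submatrix_mul_equiv _ _ id finSumFinEquiv.symm id).trans
    (by simp [Matrix.fromCols_mul_fromRows])

lemma fst_mul_inr : fst A C c i * inr A C c i = 0 :=
  (Matrix.submatrix_mul_equiv _ _ id finSumFinEquiv.symm id).trans
    (by simp [Matrix.fromCols_mul_fromRows])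

lemma snd_mul_inl : snd A C c i * inl A C c i = 0 :=
  (Matrix.submatrix_mul_equiv _ _ id finSumFinEquiv.symm id).trans
    (by simp [Matrix.fromCols_mul_fromRows])

lemma snd_mul_inr : snd A C c i * inr A C c i = 1 :=
  (Matrix.submatrix_mul_equiv _ _ id finSumFinEquiv.symm id).trans
    (by simp [Matrix.fromCols_mul_fromRows])

lemma inl_mul_fst_add_inr_mul_snd :
    inl A C c i * fst A C c i + inr A C c i * snd A C c i = 1 :=
  congr(Matrix.submatrix $fromRows_mul_fromCols_add finSumFinEquiv.symm finSumFinEquiv.symm).trans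
    (Matrix.submatrix_one_equiv _)

lemma fst_mul_add {n : Type*} (a : Matrix (Fin (A.d i)) n k) (b : Matrix (Fin (C.d i)) n k) :
    fst A C c i * (inl A C c i * a + inr A C c i * b) = a := by
  rw [Matrix.mul_add, ← Matrix.mul_assoc, ← Matrix.mul_assoc, fst_mul_inl, fst_mul_inr,
    Matrix.one_mul, Matrix.zero_mul, add_zero]

lemma snd_mul_add {n : Type*} (a : Matrix (Fin (A.d i)) n k) (b : Matrix (Fin (C.d i)) n k) :
    snd A C c i * (inl A C c i * a + inr A C c i * b) = b := by
  rw [Matrix.mul_add, ← Matrix.mul_assoc, ← Matrix.mul_assoc, snd_mul_inl, snd_mul_inr,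
    Matrix.one_mul, Matrix.zero_mul, zero_add]

variable (x : Fin Q.a)

lemma mat_mul_inl :
    (extension A C c).mat x * inl A C c (Q.src x) = inl A C c (Q.tgt x) * A.mat x :=
  (Matrix.submatrix_mul_equiv _ _ _ finSumFinEquiv.symm id).trans
    congr(Matrix.submatrix $(fromBlocks_mul_fromRows_one_zero ..) finSumFinEquiv.symm id)

lemma mat_mul_inr :
    (extension A C c).mat x * inr A C c (Q.src x) =
      inl A C c (Q.tgt x) * c x + inr A C c (Q.tgt x) * C.mat x :=
  (Matrix.submatrix_mul_equiv _ _ _ finSumFinEquiv.symm id).trans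
    congr(Matrix.submatrix $(fromBlocks_mul_fromRows_zero_one ..) finSumFinEquiv.symm id)

lemma fst_mul_mat :
    fst A C c (Q.tgt x) * (extension A C c).mat x =
      A.mat x * fst A C c (Q.src x) + c x * snd A C c (Q.src x) :=
  (Matrix.submatrix_mul_equiv _ _ id finSumFinEquiv.symm _).trans
    congr(Matrix.submatrix $(fromCols_one_zero_mul_fromBlocks ..) id finSumFinEquiv.symm)

lemma snd_mul_mat :
    snd A C c (Q.tgt x) * (extension A C c).mat x = C.mat x * snd A C c (Q.src x) :=
  (Matrix.submatrix_mul_equiv _ _ id finSumFinEquiv.symm _).trans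
    congr(Matrix.submatrix $(fromCols_zero_one_mul_fromBlocks ..) id finSumFinEquiv.symm)

lemma inl_mem_homSpace : inl A C c ∈ homSpace A (extension A C c) :=
  fun x => (mat_mul_inl A C c x).symm

lemma snd_mem_homSpace : snd A C c ∈ homSpace (extension A C c) C :=
  snd_mul_mat A C c

lemma inr_mem_homSpace : inr A C 0 ∈ homSpace C (extension A C 0) := fun x => by
  rw [mat_mul_inr, Pi.zero_apply, Matrix.mul_zero, zero_add]

lemma fst_mem_homSpace : fst A C 0 ∈ homSpace (extension A C 0) A := fun x => by
  rw [fst_mul_mat, Pi.zero_apply, Matrix.zero_mul, add_zero]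

lemma isSES : IsSES A (extension A C c) C (inl A C c) (snd A C c) :=
  isSES_of_splitting (inl_mem_homSpace A C c) (snd_mem_homSpace A C c) (fst A C c) (inr A C c)
    (fst_mul_inl A C c) (snd_mul_inr A C c) (inl_mul_fst_add_inr_mul_snd A C c)

end extension

end Constructions

section Thick

variable {k : Type} [Field k] {Q : FinQuiver}

namespace Thick

variable {P : QRep k Q → Prop} (hP : Thick P)
include hP

lemma summand_mem {L M : QRep k Q} (h : IsSummand L M) (hM : P M) : P L := hP.2.1 L M h hM

variable {A B C : QRep k Q} {f : ∀ i, Matrix (Fin (B.d i)) (Fin (A.d i)) k}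
  {g : ∀ i, Matrix (Fin (C.d i)) (Fin (B.d i)) k} (h : IsSES A B C f g)
include h

lemma left_mem (hB : P B) (hC : P C) : P A := (hP.2.2 A B C f g h).2.2 hB hC

lemma middle_mem (hA : P A) (hC : P C) : P B := (hP.2.2 A B C f g h).2.1 hA hC

lemma right_mem (hA : P A) (hB : P B) : P C := (hP.2.2 A B C f g h).1 hA hB

end Thick

lemma extension.isSummand_left (A C : QRep k Q) : IsSummand A (extension A C 0) :=
  ⟨inl A C 0, inl_mem_homSpace A C 0, fst A C 0, fst_mem_homSpace A C, fst_mul_inl A C 0⟩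

/-- `Ext¹(Z, R) → Ext¹(Z, I)` is surjective when `R → I` is, because `Ext²` vanishes. -/
lemma IsSES.exists_lift_of_surjective {R I S Z : QRep k Q}
    {j : ∀ i, Matrix (Fin (S.d i)) (Fin (I.d i)) k} {q : ∀ i, Matrix (Fin (Z.d i)) (Fin (S.d i)) k}
    (h : IsSES I S Z j q) {p : ∀ i, Matrix (Fin (I.d i)) (Fin (R.d i)) k} (hp : p ∈ homSpace R I)
    (hsurj : ∀ i, Function.Surjective (p i).mulVecLin) :
    ∃ (L : QRep k Q) (i : ∀ v, Matrix (Fin (L.d v)) (Fin (R.d v)) k)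
      (t : ∀ v, Matrix (Fin (Z.d v)) (Fin (L.d v)) k)
      (u : ∀ v, Matrix (Fin (S.d v)) (Fin (L.d v)) k),
      IsSES R L Z i t ∧ u ∈ homSpace L S ∧ (∀ v, u v * i v = j v * p v) ∧
        ∀ v, q v * u v = t v := by
  obtain ⟨r, s, hrs⟩ := h.exists_splitting
  choose p' hp' using fun i => Matrix.mulVec_surjective_iff_exists_right_inverse.1 (hsurj i)
  let c (x : Fin Q.a) : Matrix (Fin (R.d (Q.tgt x))) (Fin (Z.d (Q.src x))) k :=
    p' (Q.tgt x) * (r (Q.tgt x) * (S.mat x * s (Q.src x) - s (Q.tgt x) * Z.mat x))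
  have hc (x) : j (Q.tgt x) * p (Q.tgt x) * c x =
      S.mat x * s (Q.src x) - s (Q.tgt x) * Z.mat x := by
    have hjr : j (Q.tgt x) * r (Q.tgt x) = 1 - s (Q.tgt x) * q (Q.tgt x) :=
      eq_sub_of_add_eq (hrs _).2.2
    have hq : q (Q.tgt x) * (S.mat x * s (Q.src x) - s (Q.tgt x) * Z.mat x) = 0 := by
      rw [Matrix.mul_sub, ← Matrix.mul_assoc, h.2.1 x, Matrix.mul_assoc, (hrs _).2.1,
        ← Matrix.mul_assoc, (hrs _).2.1, Matrix.mul_one, Matrix.one_mul, sub_self]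
    rw [Matrix.mul_assoc, ← Matrix.mul_assoc (p (Q.tgt x)), hp', Matrix.one_mul,
      ← Matrix.mul_assoc, hjr, Matrix.sub_mul, Matrix.mul_assoc (s (Q.tgt x)), hq,
      Matrix.mul_zero, sub_zero, Matrix.one_mul]
  refine ⟨extension R Z c, extension.inl R Z c, extension.snd R Z c,
    fun v => j v * p v * extension.fst R Z c v + s v * extension.snd R Z c v,
    extension.isSES R Z c, fun x => ?_, fun v => ?_, fun v => ?_⟩
  · have hjp : j (Q.tgt x) * p (Q.tgt x) * R.mat x = S.mat x * (j (Q.src x) * p (Q.src x)) := by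
      rw [Matrix.mul_assoc, hp x, ← Matrix.mul_assoc, h.1 x, Matrix.mul_assoc]
    rw [Matrix.add_mul, Matrix.mul_assoc (j (Q.tgt x) * p (Q.tgt x)), extension.fst_mul_mat,
      Matrix.mul_assoc (s (Q.tgt x)), extension.snd_mul_mat, Matrix.mul_add, ← Matrix.mul_assoc,
      hjp, ← Matrix.mul_assoc (j (Q.tgt x) * p (Q.tgt x)), hc, Matrix.sub_mul, Matrix.mul_add]
    simp only [Matrix.mul_assoc]
    abel
  · rw [Matrix.add_mul, Matrix.mul_assoc (j v * p v), extension.fst_mul_inl,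
      Matrix.mul_assoc (s v), extension.snd_mul_inl, Matrix.mul_one, Matrix.mul_zero, add_zero]
  · rw [Matrix.mul_add, ← Matrix.mul_assoc, ← Matrix.mul_assoc, ← Matrix.mul_assoc, h.mul_eq_zero,
      (hrs v).2.1, Matrix.zero_mul, Matrix.zero_mul, zero_add, Matrix.one_mul]

lemma isSES_of_pushout {R L Z I S : QRep k Q}
    {i : ∀ v, Matrix (Fin (L.d v)) (Fin (R.d v)) k} {t : ∀ v, Matrix (Fin (Z.d v)) (Fin (L.d v)) k}
    {j : ∀ i, Matrix (Fin (S.d i)) (Fin (I.d i)) k} {q : ∀ i, Matrix (Fin (Z.d i)) (Fin (S.d i)) k}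
    (hL : IsSES R L Z i t) (hS : IsSES I S Z j q)
    {p : ∀ i, Matrix (Fin (I.d i)) (Fin (R.d i)) k} {u : ∀ v, Matrix (Fin (S.d v)) (Fin (L.d v)) k}
    (hp : p ∈ homSpace R I) (hu : u ∈ homSpace L S) (hui : ∀ v, u v * i v = j v * p v)
    (hqu : ∀ v, q v * u v = t v) :
    IsSES R (extension I L 0) S
      (fun v => extension.inl I L 0 v * p v - extension.inr I L 0 v * i v)
      (fun v => j v * extension.fst I L 0 v + u v * extension.snd I L 0 v) := by
  obtain ⟨r, s, hrs⟩ := hL.exists_splitting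
  obtain ⟨j', hj'⟩ := hS.exists_retraction (s := fun v => u v * s v) fun v => by
    rw [← Matrix.mul_assoc, hqu, (hrs v).2.1]
  have hju (v) : j' v * u v = p v * r v := by
    rw [← Matrix.mul_one (u v), ← (hrs v).2.2, Matrix.mul_add, ← Matrix.mul_assoc, hui,
      ← Matrix.mul_assoc (u v), Matrix.mul_add, ← Matrix.mul_assoc, ← Matrix.mul_assoc,
      ← Matrix.mul_assoc, (hj' v).1, (hj' v).2.1, Matrix.one_mul, Matrix.zero_mul, add_zero]
  refine isSES_of_splitting
    (sub_mem (mul_mem_homSpace hp (extension.inl_mem_homSpace I L 0))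
      (mul_mem_homSpace hL.1 (extension.inr_mem_homSpace I L)))
    (add_mem (mul_mem_homSpace (extension.fst_mem_homSpace I L) hS.1)
      (mul_mem_homSpace (extension.snd_mem_homSpace I L 0) hu))
    (fun v => -(r v * extension.snd I L 0 v))
    (fun v => extension.inl I L 0 v * j' v + extension.inr I L 0 v * (s v * q v))
    (fun v => ?_) (fun v => ?_) (fun v => ?_)
  · rw [sub_eq_add_neg, ← Matrix.mul_neg (extension.inr I L 0 v), Matrix.neg_mul, Matrix.mul_assoc,
      extension.snd_mul_add, Matrix.mul_neg, neg_neg, (hrs v).1]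
  · rw [Matrix.add_mul, Matrix.mul_assoc, extension.fst_mul_add, Matrix.mul_assoc (u v),
      extension.snd_mul_add, ← Matrix.mul_assoc (u v), (hj' v).2.2]
  · have hj'G : j' v * (j v * extension.fst I L 0 v + u v * extension.snd I L 0 v) =
        extension.fst I L 0 v + p v * (r v * extension.snd I L 0 v) := by
      rw [Matrix.mul_add, ← Matrix.mul_assoc, (hj' v).1, Matrix.one_mul, ← Matrix.mul_assoc, hju,
        Matrix.mul_assoc]
    have hqG : s v * q v * (j v * extension.fst I L 0 v + u v * extension.snd I L 0 v) =
        extension.snd I L 0 v - i v * (r v * extension.snd I L 0 v) := by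
      rw [Matrix.mul_assoc, Matrix.mul_add, ← Matrix.mul_assoc (q v), hS.mul_eq_zero,
        Matrix.zero_mul, zero_add, ← Matrix.mul_assoc (q v), hqu, ← Matrix.mul_assoc,
        eq_sub_of_add_eq' (hrs v).2.2, Matrix.sub_mul, Matrix.one_mul, Matrix.mul_assoc]
    rw [← extension.inl_mul_fst_add_inr_mul_snd I L 0 v, Matrix.add_mul,
      Matrix.mul_assoc (extension.inl I L 0 v), hj'G, Matrix.mul_assoc (extension.inr I L 0 v), hqG,
      Matrix.mul_neg, Matrix.sub_mul, Matrix.mul_add, Matrix.mul_sub, Matrix.mul_assoc,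
      Matrix.mul_assoc]
    abel

/-- The image `I` of `p` is a direct summand of the middle term of `0 → R → I ⊕ L → S → 0`. -/
lemma Thick.image_mem {P : QRep k Q → Prop} (hP : Thick P) {R I S : QRep k Q}
    {p : ∀ i, Matrix (Fin (I.d i)) (Fin (R.d i)) k} {j : ∀ i, Matrix (Fin (S.d i)) (Fin (I.d i)) k}
    (hp : p ∈ homSpace R I) (hj : j ∈ homSpace I S)
    (hsurj : ∀ i, Function.Surjective (p i).mulVecLin)
    (hinj : ∀ i, Function.Injective (j i).mulVecLin) (hR : P R) (hS : P S) : P I := by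
  obtain ⟨Z, q, hZ⟩ := exists_cokernel hj hinj
  obtain ⟨L, i, t, u, hL, hu, hui, hqu⟩ := hZ.exists_lift_of_surjective hp hsurj
  exact hP.summand_mem (extension.isSummand_left I L)
    (hP.middle_mem (isSES_of_pushout hL hZ hp hu hui hqu) hR hS)

end Thick

section EulerForm

variable {k : Type} [Field k] {Q : FinQuiver} (M N : QRep k Q)

lemma homSpace_eq_ker : homSpace M N = LinearMap.ker (extMap M N) := by
  ext f
  exact ⟨fun h => funext fun x => sub_eq_zero.2 (h x), fun h x => sub_eq_zero.1 (congrFun h x)⟩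

lemma euler_dimVec : Q.euler M.dimVec N.dimVec = homDim M N - extDim M N := by
  have hdom := (extMap M N).finrank_range_add_finrank_ker
  have hcod := (LinearMap.range (extMap M N)).finrank_quotient_add_finrank
  rw [← homSpace_eq_ker, Module.finrank_pi_fintype] at hdom
  rw [Module.finrank_pi_fintype] at hcod
  simp only [Module.finrank_matrix, Fintype.card_fin, Module.finrank_self, mul_one] at hdom hcod
  simp only [FinQuiver.euler, dimVec, homDim, extDim]
  zify at hdom hcod
  simp only [mul_comm ((M.d _ : ℕ) : ℤ)]
  linarith

variable {M N}

lemma IsSES.euler_dimVec_eq {A B C : QRep k Q} {f : ∀ i, Matrix (Fin (B.d i)) (Fin (A.d i)) k}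
    {g : ∀ i, Matrix (Fin (C.d i)) (Fin (B.d i)) k} (h : IsSES A B C f g) (e : Fin Q.n → ℤ) :
    Q.euler e B.dimVec = Q.euler e A.dimVec + Q.euler e C.dimVec := by
  rw [h.dimVec_eq, ← Q.eulerForm_apply, map_add, Q.eulerForm_apply, Q.eulerForm_apply]

lemma homDim_eq_zero : homDim M N = 0 ↔ Function.Injective (extMap M N) := by
  rw [homDim, Submodule.finrank_eq_zero, homSpace_eq_ker, LinearMap.ker_eq_bot]

lemma extDim_eq_zero : extDim M N = 0 ↔ Function.Surjective (extMap M N) := by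
  rw [extDim, Module.finrank_zero_iff, Submodule.Quotient.subsingleton_iff, LinearMap.range_eq_top]

lemma rPerp_iff_bijective : RPerp M N ↔ Function.Bijective (extMap M N) :=
  and_congr homDim_eq_zero extDim_eq_zero

lemma RPerp.euler_eq_zero (h : RPerp M N) : Q.euler M.dimVec N.dimVec = 0 := by
  rw [euler_dimVec, h.1, h.2, sub_self]

end EulerForm

section LongExactSequence

variable {k : Type} [Field k]

/-- Composition with the maps `f i : k ^ a i → k ^ b i`. With `extMap`, it computes the effect of
a morphism on the groups `Hom(E, -)` and `Ext¹(E, -)`. -/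
def mulLeftPi {ι : Type*} {a b : ι → ℕ} (f : ∀ i, Matrix (Fin (b i)) (Fin (a i)) k) (e : ι → ℕ) :
    (∀ i, Matrix (Fin (a i)) (Fin (e i)) k) →ₗ[k] ∀ i, Matrix (Fin (b i)) (Fin (e i)) k :=
  LinearMap.piMap fun i => mulLeftLinearMap (Fin (e i)) k (f i)

section

variable {ι : Type*} {a b c : ι → ℕ} {f : ∀ i, Matrix (Fin (b i)) (Fin (a i)) k}
  {g : ∀ i, Matrix (Fin (c i)) (Fin (b i)) k} {r : ∀ i, Matrix (Fin (a i)) (Fin (b i)) k}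
  {s : ∀ i, Matrix (Fin (b i)) (Fin (c i)) k} {e : ι → ℕ}

lemma mulLeftPi_apply (h : ∀ i, Matrix (Fin (a i)) (Fin (e i)) k) (i : ι) :
    mulLeftPi f e h i = f i * h i := rfl

lemma mulLeftPi_leftInverse (h : ∀ i, r i * f i = 1) :
    Function.LeftInverse (mulLeftPi r e) (mulLeftPi f e) := fun u => funext fun i => by
  rw [mulLeftPi_apply, mulLeftPi_apply, ← Matrix.mul_assoc, h, Matrix.one_mul]

lemma mulLeftPi_exact (hgf : ∀ i, g i * f i = 0) (hrs : ∀ i, f i * r i + s i * g i = 1) :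
    Function.Exact (mulLeftPi f e) (mulLeftPi g e) := by
  refine fun u => ⟨fun hu => ⟨mulLeftPi r e u, funext fun i => ?_⟩, ?_⟩
  · have hu : g i * u i = 0 := congrFun hu i
    rw [mulLeftPi_apply, mulLeftPi_apply, ← Matrix.mul_assoc, eq_sub_of_add_eq (hrs i),
      Matrix.sub_mul, Matrix.mul_assoc, hu, Matrix.mul_zero, sub_zero, Matrix.one_mul]
  · rintro ⟨v, rfl⟩
    refine funext fun i => ?_
    rw [mulLeftPi_apply, mulLeftPi_apply, ← Matrix.mul_assoc, hgf, Matrix.zero_mul]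
    rfl

end

variable {Q : FinQuiver} {A B C : QRep k Q} {f : ∀ i, Matrix (Fin (B.d i)) (Fin (A.d i)) k}
  {g : ∀ i, Matrix (Fin (C.d i)) (Fin (B.d i)) k} (E : QRep k Q)

lemma extMap_comp_mulLeftPi (hf : f ∈ homSpace A B) :
    extMap E B ∘ₗ mulLeftPi f E.d =
      mulLeftPi (fun x => f (Q.tgt x)) (fun x => E.d (Q.src x)) ∘ₗ extMap E A := by
  refine LinearMap.ext fun h => funext fun x => ?_
  change f (Q.tgt x) * h (Q.tgt x) * E.mat x - B.mat x * (f (Q.src x) * h (Q.src x)) =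
    f (Q.tgt x) * (h (Q.tgt x) * E.mat x - A.mat x * h (Q.src x))
  rw [Matrix.mul_sub, Matrix.mul_assoc, ← Matrix.mul_assoc (B.mat x), ← hf x,
    Matrix.mul_assoc (f (Q.tgt x))]

lemma IsSES.rPerp (h : IsSES A B C f g) :
    (RPerp E A → RPerp E B → RPerp E C) ∧ (RPerp E A → RPerp E C → RPerp E B) ∧
      (RPerp E B → RPerp E C → RPerp E A) := by
  obtain ⟨r, s, hrs⟩ := h.exists_splitting
  have hgf := h.mul_eq_zero
  have hf := (mulLeftPi_leftInverse (e := E.d) fun i => (hrs i).1).injective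
  have hf' := (mulLeftPi_leftInverse (e := fun x => E.d (Q.src x))
    fun x => (hrs (Q.tgt x)).1).injective
  have hg := (mulLeftPi_leftInverse (e := E.d) fun i => (hrs i).2.1).surjective
  have hg' := (mulLeftPi_leftInverse (e := fun x => E.d (Q.src x))
    fun x => (hrs (Q.tgt x)).2.1).surjective
  have hfg := mulLeftPi_exact (e := E.d) hgf fun i => (hrs i).2.2
  have hfg' := mulLeftPi_exact (e := fun x => E.d (Q.src x)) (fun x => hgf (Q.tgt x))
    fun x => (hrs (Q.tgt x)).2.2
  have hcf := (extMap_comp_mulLeftPi E h.1).symm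
  have hcg := (extMap_comp_mulLeftPi E h.2.1).symm
  simp only [rPerp_iff_bijective]
  refine ⟨fun hA hB => ?_, fun hA hC => ?_, fun hB hC => ?_⟩
  · exact LinearMap.bijective_of_surjective_of_bijective_of_right_exact _ _ _ _ _ _ _ hcf hcg
      hfg hfg' hA.2 hB hg hg'
  · exact LinearMap.bijective_of_surjective_of_bijective_of_bijective_of_injective
      (0 : PUnit →ₗ[k] _) _ _ (0 : _ →ₗ[k] PUnit) (0 : PUnit →ₗ[k] _) _ _ (0 : _ →ₗ[k] PUnit)
      0 _ _ _ 0 (by simp) hcf hcg (by simp) ((LinearMap.exact_zero_iff_injective _ _).2 hf) hfg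
      ((LinearMap.exact_zero_iff_surjective _ _).2 hg)
      ((LinearMap.exact_zero_iff_injective _ _).2 hf') hfg'
      ((LinearMap.exact_zero_iff_surjective _ _).2 hg')
      (Function.surjective_to_subsingleton _) hA hC (Function.injective_of_subsingleton _)
  · exact LinearMap.bijective_of_bijective_of_injective_of_left_exact _ _ _ _ _ _ _ hcf hcg
      hfg hfg' hB hC.1 hf hf'

lemma IsSummand.rPerp {L M : QRep k Q} (h : IsSummand L M) (hM : RPerp E M) : RPerp E L := by
  obtain ⟨f, hf, g, hg, hgf⟩ := h
  rw [rPerp_iff_bijective] at hM ⊢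
  constructor
  · have := hM.1.comp (mulLeftPi_leftInverse (e := E.d) hgf).injective
    rw [← LinearMap.coe_comp, extMap_comp_mulLeftPi E hf, LinearMap.coe_comp] at this
    exact this.of_comp
  · have := (mulLeftPi_leftInverse (e := fun x => E.d (Q.src x))
      fun x => hgf (Q.tgt x)).surjective.comp hM.2
    rw [← LinearMap.coe_comp, ← extMap_comp_mulLeftPi E hg, LinearMap.coe_comp] at this
    exact this.of_comp

lemma thick_rPerp : Thick (RPerp E) :=
  ⟨fun _ _ h => h.isSummand.rPerp E, fun _ _ h => h.rPerp E, fun _ _ _ _ _ h => h.rPerp E⟩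

lemma Thick.inf {P P' : QRep k Q → Prop} (hP : Thick P) (hP' : Thick P') : Thick (P ⊓ P') := by
  refine ⟨fun M N h => And.imp (hP.1 M N h) (hP'.1 M N h),
    fun L M h => And.imp (hP.2.1 L M h) (hP'.2.1 L M h), fun A B C f g h => ?_⟩
  obtain ⟨hC, hB, hA⟩ := hP.2.2 A B C f g h
  obtain ⟨hC', hB', hA'⟩ := hP'.2.2 A B C f g h
  exact ⟨fun a b => ⟨hC a.1 b.1, hC' a.2 b.2⟩, fun a c => ⟨hB a.1 c.1, hB' a.2 c.2⟩,
    fun b c => ⟨hA b.1 c.1, hA' b.2 c.2⟩⟩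

end LongExactSequence

section Bricks

variable {k : Type} [Field k] {Q : FinQuiver}

lemma dimVec_eq_zero {M : QRep k Q} : M.dimVec = 0 ↔ M.d = 0 := by
  simp [dimVec, funext_iff]

lemma eq_zero_of_d_eq_zero {M N : QRep k Q} (hM : M.d = 0)
    (f : ∀ i, Matrix (Fin (N.d i)) (Fin (M.d i)) k) : f = 0 := by
  funext i
  have : IsEmpty (Fin (M.d i)) := by rw [hM]; exact Fin.isEmpty
  exact Subsingleton.elim _ _

/-- A simple object of the full subcategory `P`. If `P` is closed under kernels and images, then
simplicity means that nonzero morphisms to objects of `P` are injective. -/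
structure IsSimpleIn (P : QRep k Q → Prop) (E : QRep k Q) : Prop where
  mem : P E
  dimVec_ne_zero : E.dimVec ≠ 0
  injective_of_ne_zero {M : QRep k Q} (hM : P M) {f : ∀ i, Matrix (Fin (M.d i)) (Fin (E.d i)) k}
    (hf : f ∈ homSpace E M) (hf0 : f ≠ 0) (i : Fin Q.n) : Function.Injective (f i).mulVecLin

/-- Choose `E` of minimal dimension with `w E ≠ 0`. Since `w` is additive on the sequence
`0 → ker f → E → im f → 0`, one of the two ends is another candidate. -/
lemma Thick.exists_isSimpleIn {P : QRep k Q → Prop} (hP : Thick P) (w : (Fin Q.n → ℤ) →+ ℤ)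
    {X : QRep k Q} (hX : P X) (hwX : w X.dimVec ≠ 0) : ∃ E, IsSimpleIn P E ∧ w E.dimVec ≠ 0 := by
  obtain ⟨E, ⟨hE, hwE⟩, hmin⟩ :=
    exists_minimalFor_of_wellFoundedLT (fun M => P M ∧ w M.dimVec ≠ 0) d ⟨X, hX, hwX⟩
  refine ⟨E, ⟨hE, fun h => hwE (by rw [h, map_zero]), fun {M} hM {f} hf hf0 => ?_⟩, hwE⟩
  obtain ⟨I, p, j, hp, hj, hsurj, hinj, hfjp⟩ := exists_image_factorization hf
  obtain ⟨K, i, hK⟩ := exists_kernel hp hsurj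
  have hI : P I := hP.image_mem hp hj hsurj hinj hE hM
  have hw : w E.dimVec = w K.dimVec + w I.dimVec := by rw [hK.dimVec_eq, map_add]
  have hd := hK.d_eq
  by_cases hwI : w I.dimVec = 0
  · have hle := hmin ⟨hP.left_mem hK hE hI, by rwa [hw, hwI, add_zero] at hwE⟩ (by simp [hd])
    have hI0 : I.d = 0 := by simpa [hd] using hle
    refine absurd (funext fun v => ?_) hf0
    rw [hfjp, congrFun (eq_zero_of_d_eq_zero hI0 j) v, Pi.zero_apply, Matrix.zero_mul]
    rfl
  · have hle := hmin ⟨hI, hwI⟩ (by simp [hd])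
    have hK0 : K.d = 0 := by simpa [hd] using hle
    intro v
    rw [hfjp, Matrix.mulVecLin_mul]
    refine (hinj v).comp (LinearMap.ker_eq_bot.1 ?_)
    rw [← (hK.2.2 v).2.2, congrFun (eq_zero_of_d_eq_zero hK0 i) v]
    simp

/-- A brick over an algebraically closed field: a nonzero representation whose only endomorphisms
are the scalars. -/
def IsBrick (E : QRep k Q) : Prop :=
  E.dimVec ≠ 0 ∧ ∀ f ∈ homSpace E E, ∃ c : k, f = c • 1

variable {E : QRep k Q}

lemma IsSimpleIn.isBrick [IsAlgClosed k] {P : QRep k Q → Prop} (hE : IsSimpleIn P E) :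
    IsBrick E := by
  refine ⟨hE.dimVec_ne_zero, fun f hf => ?_⟩
  obtain ⟨i, hi⟩ := Function.ne_iff.1 (mt dimVec_eq_zero.2 hE.dimVec_ne_zero)
  have : NeZero (E.d i) := ⟨hi⟩
  obtain ⟨c, hc⟩ := Module.End.exists_eigenvalue (f i).mulVecLin
  obtain ⟨v, hv, hv0⟩ := hc.exists_hasEigenvector
  refine ⟨c, by_contra fun hfc => hv0 ?_⟩
  have hinj := hE.injective_of_ne_zero hE.mem
    (sub_mem hf (Submodule.smul_mem _ c one_mem_homSpace)) (sub_ne_zero.2 hfc) i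
  rw [Module.End.mem_eigenspace_iff, Matrix.mulVecLin_apply] at hv
  refine hinj ?_
  rw [map_zero]
  simp [hv]

namespace IsBrick

variable (hE : IsBrick E)
include hE

lemma exists_d_ne_zero : ∃ i, E.d i ≠ 0 := Function.ne_iff.1 (mt dimVec_eq_zero.2 hE.1)

lemma one_ne_zero : (1 : ∀ i, Matrix (Fin (E.d i)) (Fin (E.d i)) k) ≠ 0 := by
  obtain ⟨i, hi⟩ := hE.exists_d_ne_zero
  have : NeZero (E.d i) := ⟨hi⟩
  exact Function.ne_iff.2 ⟨i, _root_.one_ne_zero⟩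

lemma homDim_self : homDim E E = 1 := by
  refine finrank_eq_one ⟨1, one_mem_homSpace⟩ (mt Subtype.ext_iff.1 hE.one_ne_zero) fun f => ?_
  obtain ⟨c, hc⟩ := hE.2 f f.2
  exact ⟨c, Subtype.ext hc.symm⟩

lemma indec : Indec E := by
  refine ⟨hE.exists_d_ne_zero, fun f hf hidem => ?_⟩
  obtain ⟨c, rfl⟩ := hE.2 f hf
  have hc : (c * c) • (1 : ∀ i, Matrix (Fin (E.d i)) (Fin (E.d i)) k) = c • 1 := funext fun i => by
    simpa [smul_smul] using hidem i
  rcases IsIdempotentElem.iff_eq_zero_or_one.1 (smul_left_injective k hE.one_ne_zero hc) with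
    rfl | rfl
  · exact .inl (zero_smul _ _)
  · exact .inr (one_smul _ _)

lemma exceptional (hpos : 0 < Q.euler E.dimVec E.dimVec) : Exceptional E := by
  rw [euler_dimVec, hE.homDim_self] at hpos
  exact ⟨hE.indec, by lia⟩

end IsBrick

end Bricks

section Generation

variable {k : Type} [Field k] {Q : FinQuiver} {A B C E M : QRep k Q}

lemma IsSES.extDim_eq_zero {f : ∀ i, Matrix (Fin (B.d i)) (Fin (A.d i)) k}
    {g : ∀ i, Matrix (Fin (C.d i)) (Fin (B.d i)) k} (h : IsSES A B C f g) (hB : extDim E B = 0) :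
    extDim E C = 0 := by
  rw [QRep.extDim_eq_zero] at hB ⊢
  obtain ⟨r, s, hrs⟩ := h.exists_splitting
  have hg := (mulLeftPi_leftInverse (e := fun x => E.d (Q.src x))
    fun x => (hrs (Q.tgt x)).2.1).surjective.comp hB
  rw [← LinearMap.coe_comp, ← extMap_comp_mulLeftPi E h.2.1, LinearMap.coe_comp] at hg
  exact hg.of_comp

lemma extMap_fst_mul (c : ∀ x : Fin Q.a, Matrix (Fin (A.d (Q.tgt x))) (Fin (C.d (Q.src x))) k)
    {s : ∀ i, Matrix (Fin ((extension A C c).d i)) (Fin (E.d i)) k}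
    (hs : s ∈ homSpace E (extension A C c)) :
    extMap E A (fun i => extension.fst A C c i * s i) =
      fun x => c x * (extension.snd A C c (Q.src x) * s (Q.src x)) := by
  funext x
  change extension.fst A C c (Q.tgt x) * s (Q.tgt x) * E.mat x -
    A.mat x * (extension.fst A C c (Q.src x) * s (Q.src x)) = _
  rw [Matrix.mul_assoc (extension.fst A C c (Q.tgt x)), hs x,
    ← Matrix.mul_assoc (extension.fst A C c (Q.tgt x)), extension.fst_mul_mat, Matrix.add_mul,
    Matrix.mul_assoc (A.mat x), Matrix.mul_assoc (c x), add_sub_cancel_left]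

lemma IsBrick.snd_mul_eq_zero (hE : IsBrick E)
    {c : ∀ x : Fin Q.a, Matrix (Fin (M.d (Q.tgt x))) (Fin (E.d (Q.src x))) k}
    (hc : c ∉ LinearMap.range (extMap E M))
    {s : ∀ i, Matrix (Fin ((extension M E c).d i)) (Fin (E.d i)) k}
    (hs : s ∈ homSpace E (extension M E c)) (i : Fin Q.n) : extension.snd M E c i * s i = 0 := by
  obtain ⟨a, ha⟩ := hE.2 _ (mul_mem_homSpace hs (extension.snd_mem_homSpace M E c))
  have ha' (j : Fin Q.n) : extension.snd M E c j * s j = a • 1 := congrFun ha j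
  suffices a = 0 by rw [ha', this, zero_smul]
  by_contra ha0
  refine hc ⟨a⁻¹ • fun j => extension.fst M E c j * s j, ?_⟩
  rw [map_smul, extMap_fst_mul c hs]
  funext x
  rw [Pi.smul_apply, ha', Matrix.mul_smul, Matrix.mul_one, inv_smul_smul₀ ha0]

lemma IsBrick.homDim_extension_le (hE : IsBrick E)
    {c : ∀ x : Fin Q.a, Matrix (Fin (M.d (Q.tgt x))) (Fin (E.d (Q.src x))) k}
    (hc : c ∉ LinearMap.range (extMap E M)) : homDim E (extension M E c) ≤ homDim E M := by
  refine (Submodule.finrank_mono fun s hs => ?_).trans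
    (Submodule.finrank_map_le (mulLeftPi (extension.inl M E c) E.d) (homSpace E M))
  have hsnd := hE.snd_mul_eq_zero hc hs
  refine ⟨fun i => extension.fst M E c i * s i, ?_, funext fun i => ?_⟩
  · rw [homSpace_eq_ker, SetLike.mem_coe, LinearMap.mem_ker, extMap_fst_mul c hs]
    funext x
    rw [hsnd, Matrix.mul_zero, Pi.zero_apply]
  · have h := congr($(extension.inl_mul_fst_add_inr_mul_snd M E c i) * s i)
    rwa [Matrix.add_mul, Matrix.mul_assoc, Matrix.mul_assoc, hsnd, Matrix.mul_zero, add_zero,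
      Matrix.one_mul] at h

lemma IsBrick.exists_isSES_of_extDim_ne_zero (hE : IsBrick E)
    (hpos : 0 < Q.euler E.dimVec E.dimVec) (hext : extDim E M ≠ 0) :
    ∃ N f g, IsSES M N E f g ∧ homDim E N ≤ homDim E M ∧ extDim E N < extDim E M := by
  obtain ⟨c, hc⟩ : ∃ c, c ∉ LinearMap.range (extMap E M) := by
    simpa [extDim_eq_zero, Function.Surjective] using hext
  have hses := extension.isSES M E c
  have hle := hE.homDim_extension_le hc
  have h := hses.euler_dimVec_eq E.dimVec
  rw [euler_dimVec, euler_dimVec E M] at h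
  exact ⟨_, _, _, hses, hle, by lia⟩

lemma IsSimpleIn.exists_isSES_of_homDim_ne_zero {P : QRep k Q → Prop} (hE : IsSimpleIn P E)
    (hpos : 0 < Q.euler E.dimVec E.dimVec) (hM : P M) (hhom : homDim E M ≠ 0)
    (hext : extDim E M = 0) :
    ∃ Z f g, IsSES E M Z f g ∧ homDim E Z < homDim E M ∧ extDim E Z = 0 := by
  obtain ⟨f, hf, hf0⟩ := Submodule.exists_mem_ne_zero_of_ne_bot
    (mt Submodule.finrank_eq_zero.2 hhom)
  obtain ⟨Z, g, hses⟩ := exists_cokernel hf (hE.injective_of_ne_zero hM hf hf0)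
  have hZ : extDim E Z = 0 := hses.extDim_eq_zero hext
  have h := hses.euler_dimVec_eq E.dimVec
  rw [euler_dimVec E M, euler_dimVec E Z, hext, hZ] at h
  exact ⟨Z, f, g, hses, by lia, hZ⟩

/-- Nonsplit extensions by copies of `E` kill `Ext¹(E, -)`, then quotients by copies of `E` kill
`Hom(E, -)`. -/
lemma IsSimpleIn.of_forall_rPerp {P P' : QRep k Q → Prop} (hP : Thick P) (hP' : Thick P')
    (hE : IsSimpleIn P E) (hbrick : IsBrick E) (hpos : 0 < Q.euler E.dimVec E.dimVec)
    (hE' : P' E) (hperp : ∀ M, P M → RPerp E M → P' M) (M : QRep k Q) (hM : P M) : P' M := by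
  induction hn : homDim E M + extDim E M using Nat.strong_induction_on generalizing M with
  | _ n ih =>
    subst hn
    by_cases hext : extDim E M = 0
    · by_cases hhom : homDim E M = 0
      · exact hperp M hM ⟨hhom, hext⟩
      · obtain ⟨Z, f, g, hses, hlt, hZ⟩ := hE.exists_isSES_of_homDim_ne_zero hpos hM hhom hext
        exact hP'.middle_mem hses hE' (ih _ (by lia) Z (hP.right_mem hses hE.mem hM) rfl)
    · obtain ⟨N, f, g, hses, hle, hlt⟩ := hbrick.exists_isSES_of_extDim_ne_zero hpos hext
      exact hP'.left_mem hses (ih _ (by lia) N (hP.middle_mem hses hM hE.mem) rfl) hE'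

end Generation

section ExceptionalSequences

variable {k : Type} [Field k] {Q : FinQuiver} {P : QRep k Q → Prop} {E X : QRep k Q} {r : ℕ}
  {F : Fin r → QRep k Q}

/-- A complete exceptional sequence in `P`. As `r = 0` is allowed while the empty class is thick,
generation is only tested against nonempty thick classes. -/
structure IsCompleteExcSeq (P : QRep k Q → Prop) {r : ℕ} (F : Fin r → QRep k Q) : Prop where
  excSeq : ExcSeq F
  mem (i : Fin r) : P (F i)
  generates (P' : QRep k Q → Prop) (hP' : Thick P') (hne : ∃ M, P' M) (hF : ∀ i, P' (F i))
    (M : QRep k Q) (hM : P M) : P' M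

lemma IsCompleteExcSeq.generatedBy {F : Fin (r + 1) → QRep k Q} (hP : Thick P)
    (hF : IsCompleteExcSeq P F) : GeneratedBy P (Set.range F) := by
  refine ⟨hP, Set.forall_mem_range.2 hF.mem, fun P' hP' hF' => ?_⟩
  rw [Set.forall_mem_range] at hF'
  exact hF.generates P' hP' ⟨F 0, hF' 0⟩ hF'

lemma ExcSeq.cons (hF : ExcSeq F) (hE : Exceptional E) (hEE : homDim E E = 1)
    (hEF : ∀ i, RPerp E (F i)) : ExcSeq (Fin.cons E F : Fin (r + 1) → QRep k Q) := by
  refine ⟨Fin.cases ⟨hE, hEE⟩ hF.1, fun i j => ?_⟩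
  cases j using Fin.cases with
  | zero => exact fun h => absurd h (Fin.not_lt_zero i)
  | succ j =>
    cases i using Fin.cases with
    | zero => exact fun _ => hEF j
    | succ i => exact fun h => hF.2 i j (Fin.succ_lt_succ_iff.1 h)

lemma IsCompleteExcSeq.cons [IsAlgClosed k] (hP : Thick P) (hE : IsSimpleIn P E)
    (hpos : 0 < Q.euler E.dimVec E.dimVec) (hF : IsCompleteExcSeq (P ⊓ RPerp E) F) :
    IsCompleteExcSeq P (Fin.cons E F : Fin (r + 1) → QRep k Q) where
  excSeq := hF.excSeq.cons (hE.isBrick.exceptional hpos) hE.isBrick.homDim_self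
    fun i => (hF.mem i).2
  mem := Fin.cases hE.mem fun i => (hF.mem i).1
  generates P' hP' hne hEF := hE.of_forall_rPerp hP hP' hE.isBrick hpos (hEF 0)
    fun M hM hEM => hF.generates P' hP' hne (fun i => hEF i.succ) M ⟨hM, hEM⟩

lemma isCompleteExcSeq_of_dimVec_eq_zero (hP : ∀ M, P M → M.dimVec = 0) :
    IsCompleteExcSeq P (Fin.elim0 : Fin 0 → QRep k Q) where
  excSeq := ⟨fun i => i.elim0, fun i => i.elim0⟩
  mem i := i.elim0
  generates P' hP' hne _ M hM := by
    obtain ⟨N, hN⟩ := hne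
    have h := dimVec_eq_zero.1 (hP M hM)
    refine hP'.summand_mem ⟨0, zero_mem _, 0, zero_mem _, fun i => ?_⟩ hN
    simpa using congrFun (eq_zero_of_d_eq_zero (N := M) h 1).symm i

/-- The integral vectors left orthogonal to `P` for the Euler form. Passing to the perpendicular
category of an exceptional object enlarges this submodule, so the process stops by noetherianity. -/
def leftOrthogonal (P : QRep k Q → Prop) : Submodule ℤ (Fin Q.n → ℤ) :=
  ⨅ (M) (_ : P M), LinearMap.ker (Q.eulerForm.flip M.dimVec)

lemma mem_leftOrthogonal {e : Fin Q.n → ℤ} :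
    e ∈ leftOrthogonal P ↔ ∀ M, P M → Q.euler e M.dimVec = 0 := by
  simp [leftOrthogonal]

lemma leftOrthogonal_lt_inf_rPerp (hE : P E) (hpos : 0 < Q.euler E.dimVec E.dimVec) :
    leftOrthogonal P < leftOrthogonal (P ⊓ RPerp E) := by
  refine SetLike.lt_iff_le_and_exists.2 ⟨fun e he => ?_, E.dimVec, ?_, fun h => ?_⟩
  · exact mem_leftOrthogonal.2 fun M hM => mem_leftOrthogonal.1 he M hM.1
  · exact mem_leftOrthogonal.2 fun M hM => hM.2.euler_eq_zero
  · exact hpos.ne' (mem_leftOrthogonal.1 h E hE)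

/-- The Tits form has no nonzero isotropic vector among the dimension vectors of `P`. -/
def IsAnisotropic (P : QRep k Q → Prop) : Prop :=
  ∀ M, P M → Q.euler M.dimVec M.dimVec = 0 → M.dimVec = 0

lemma IsAnisotropic.inf_rPerp (hP : IsAnisotropic P) (E : QRep k Q) :
    IsAnisotropic (P ⊓ RPerp E) :=
  fun M hM => hP M hM.1

variable (hq : ∀ d, 0 ≤ Q.euler d d)
include hq

lemma IsAnisotropic.exists_isSimpleIn (hani : IsAnisotropic P) (hP : Thick P) (hX : P X)
    (hX0 : X.dimVec ≠ 0) : ∃ E, IsSimpleIn P E ∧ 0 < Q.euler E.dimVec E.dimVec := by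
  obtain ⟨i, hi⟩ := Function.ne_iff.1 hX0
  obtain ⟨E, hE, -⟩ := hP.exists_isSimpleIn (Pi.evalAddMonoidHom _ i) hX hi
  exact ⟨E, hE, (hq _).lt_of_ne' (mt (hani E hE.mem) hE.dimVec_ne_zero)⟩

lemma IsAnisotropic.exists_isCompleteExcSeq [IsAlgClosed k] (hani : IsAnisotropic P)
    (hP : Thick P) : ∃ (r : ℕ) (F : Fin r → QRep k Q), IsCompleteExcSeq P F := by
  induction h : leftOrthogonal P using WellFoundedGT.induction generalizing P with
  | _ S ih =>
    subst h
    by_cases! h0 : ∀ M, P M → M.dimVec = 0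
    · exact ⟨0, _, isCompleteExcSeq_of_dimVec_eq_zero h0⟩
    · obtain ⟨X, hX, hX0⟩ := h0
      obtain ⟨E, hE, hpos⟩ := hani.exists_isSimpleIn hq hP hX hX0
      obtain ⟨r, F, hF⟩ := ih _ (leftOrthogonal_lt_inf_rPerp hE.mem hpos) (hani.inf_rPerp E)
        (hP.inf (thick_rPerp E)) rfl
      exact ⟨r + 1, _, hF.cons hP hE hpos⟩

/-- If `d` is an isotropic dimension vector of `P`, then `⟨-, d⟩` vanishes on all isotropic
vectors, so a simple object of `P` on which it does not vanish is exceptional, and its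
perpendicular category contains no isotropic vector. -/
lemma Thick.exists_isSimpleIn_isAnisotropic (hP : Thick P) (hX : P X) (hX0 : X.dimVec ≠ 0)
    (hdet : Q.DetectsIsotropic X.dimVec) :
    ∃ E, IsSimpleIn P E ∧ 0 < Q.euler E.dimVec E.dimVec ∧ IsAnisotropic (P ⊓ RPerp E) := by
  by_cases! hani : IsAnisotropic P
  · obtain ⟨E, hE, hpos⟩ := hani.exists_isSimpleIn hq hP hX hX0
    exact ⟨E, hE, hpos, hani.inf_rPerp E⟩
  simp only [IsAnisotropic, not_forall] at hani
  obtain ⟨M, -, hd, hd0⟩ := hani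
  obtain ⟨E, hE, hEd⟩ := hP.exists_isSimpleIn (Q.eulerForm.flip M.dimVec).toAddMonoidHom hX
    (mt (hdet _ hd) hd0)
  have hpos := (hq E.dimVec).lt_of_ne' fun h => hEd (hdet.euler_eq_zero hq hd h)
  exact ⟨E, hE, hpos, fun N hN hiso =>
    hdet.of_euler_ne_zero hq hd hEd N.dimVec hiso hN.2.euler_eq_zero⟩

end ExceptionalSequences

end QRep

open QRep in
theorem thick_with_nonregular_generated_by_excSeq_general (k : Type) [Field k] [IsAlgClosed k]
    (Q : FinQuiver) (hq : ∀ d, 0 ≤ Q.euler d d) (C : QRep k Q → Prop) (hC : Thick C)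
    (X : QRep k Q) (hX : C X) (hX0 : X.dimVec ≠ 0) (hdet : Q.DetectsIsotropic X.dimVec) :
    ∃ (r : ℕ) (E : Fin r → QRep k Q), ExcSeq E ∧ GeneratedBy C (Set.range E) := by
  obtain ⟨E, hE, hpos, hani⟩ := hC.exists_isSimpleIn_isAnisotropic hq hX hX0 hdet
  obtain ⟨r, F, hF⟩ := hani.exists_isCompleteExcSeq hq (hC.inf (thick_rPerp E))
  have hEF := hF.cons hC hE hpos
  exact ⟨r + 1, _, hEF.excSeq, hEF.generatedBy hC⟩

open QRep in
/-- a thick subcategory of rep(Q), `Q` Euclidean, containing a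
preprojective or preinjective indecomposable (⟨δ, dim X⟩ ≠ 0) is generated by an
exceptional sequence. -/
theorem thick_with_nonregular_generated_by_excSeq (k : Type) [Field k]
    [IsAlgClosed k] (Q : FinQuiver) (hQ : Q.IsEuclidean)
    (δ : Fin Q.n → ℤ) (hδ : Q.IsNullRoot δ)
    (C : QRep k Q → Prop) (hC : Thick C)
    (X : QRep k Q) (hX : C X) (hXind : Indec X)
    (hXnr : Q.euler δ X.dimVec ≠ 0) :
    ∃ (r : ℕ) (E : Fin r → QRep k Q), ExcSeq E ∧
      GeneratedBy C (Set.range E) := by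
  have hX0 : X.dimVec ≠ 0 := mt dimVec_eq_zero.1 (Function.ne_iff.2 hXind.1)
  exact thick_with_nonregular_generated_by_excSeq_general k Q hQ.2.2.1 C hC X hX hX0
    (hδ.detectsIsotropic hQ.2.2.1 hXnr)
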